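/- Let (Σ₀, R) be a string rewriting system. If →_R is terminating (there is no infinite sequence of rewriting steps x₀ →_R x₁ →_R x₂ →_R ⋯) and every critical branching of R is joinable, then →_R is confluent: for any words x, y, z with x →*_R y and x →*_R z (where →*_R is the reflexive-transitive closure of →_R), there exists a word w with y →*_R w and z →*_R w. -/

import Mathlib

open Relation

/-- A rewriting step `(u, r, v)` of a string rewriting system `R` over the free monoid on `α`:
`u` and `v` are the context words and `r = (a, b)` is a rule of `R`. -/
structure Step {α : Type*} (R : Set (FreeMonoid α × FreeMonoid α)) where
  left : FreeMonoid α
  rule : FreeMonoid α × FreeMonoid α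
  right : FreeMonoid α
  rule_mem : rule ∈ R

namespace Step

variable {α : Type*} {R : Set (FreeMonoid α × FreeMonoid α)}

/-- The source `u·a·v` of the rewriting step `(u, (a,b), v)`. -/
def src (f : Step R) : FreeMonoid α := f.left * f.rule.1 * f.right

/-- The target `u·b·v` of the rewriting step `(u, (a,b), v)`. -/
def tgt (f : Step R) : FreeMonoid α := f.left * f.rule.2 * f.right

/-- The whiskered step `u·(p, r, q)·v = (u·p, r, q·v)`. -/
def whisker (u : FreeMonoid α) (f : Step R) (v : FreeMonoid α) : Step R :=
  ⟨u * f.left, f.rule, f.right * v, f.rule_mem⟩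

end Step

/-- The one-step rewriting relation `→_R`. -/
def RwStep {α : Type*} (R : Set (FreeMonoid α × FreeMonoid α)) (x y : FreeMonoid α) : Prop :=
  ∃ f : Step R, f.src = x ∧ f.tgt = y

/-- Two words are joinable if they have a common reduct under `→*_R`. -/
def Joinable {α : Type*} (R : Set (FreeMonoid α × FreeMonoid α)) (y z : FreeMonoid α) : Prop :=
  ∃ w, ReflTransGen (RwStep R) y w ∧ ReflTransGen (RwStep R) z w

/-- `(f, g)` is a Peiffer branching in the given order: the common source factors as
`u·a·v·b·w` with `f = (u, (a,a'), v·b·w)` and `g = (u·a·v, (b,b'), w)`. -/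
def PeifferOriented {α : Type*} {R : Set (FreeMonoid α × FreeMonoid α)}
    (f g : Step R) : Prop :=
  ∃ v : FreeMonoid α, g.left = f.left * f.rule.1 * v ∧ f.right = v * g.rule.1 * g.right

/-- A Peiffer branching, up to permutation of the two steps. -/
def Peiffer {α : Type*} {R : Set (FreeMonoid α × FreeMonoid α)} (f g : Step R) : Prop :=
  PeifferOriented f g ∨ PeifferOriented g f

/-- An overlapping branching: a local branching that is neither aspherical nor Peiffer. -/
def Overlapping {α : Type*} {R : Set (FreeMonoid α × FreeMonoid α)} (f g : Step R) : Prop :=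
  f.src = g.src ∧ f ≠ g ∧ ¬ Peiffer f g

/-- The order on local branchings generated by `(f, g) ≤ (u·f·v, u·g·v)`. -/
def BranchLE {α : Type*} {R : Set (FreeMonoid α × FreeMonoid α)}
    (p q : Step R × Step R) : Prop :=
  ∃ u v : FreeMonoid α, q.1 = Step.whisker u p.1 v ∧ q.2 = Step.whisker u p.2 v

/-- A critical branching: an overlapping branching that is minimal for the order `BranchLE`. -/
def Critical {α : Type*} {R : Set (FreeMonoid α × FreeMonoid α)} (f g : Step R) : Prop :=
  Overlapping f g ∧
    ∀ f' g' : Step R, Overlapping f' g' → BranchLE (f', g') (f, g) → (f', g') = (f, g)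


/-- `→_R` is terminating: there is no infinite sequence of rewriting steps. -/
def Terminating {α : Type*} (R : Set (FreeMonoid α × FreeMonoid α)) : Prop :=
  ¬ ∃ s : ℕ → FreeMonoid α, ∀ n, RwStep R (s n) (s (n + 1))

/-!
Termination reduces confluence to local confluence (Newman's lemma, by well-founded induction on
the source). A local branching with equal steps is trivially joinable, and in a Peiffer branching
each step can still be performed after the other. Nontrivial whiskering strictly increases the
length of the source, so every overlapping branching is a whiskering of a critical one, and
joinability is stable under whiskering.
-/

section AbstractRewriting

variable {β : Type*} {r : β → β → Prop}

/-- Local confluence of a relation `r`: one-step branchings are joinable by `r`-reductions of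
arbitrary length. It is the hypothesis of Newman's lemma. -/
def LocallyConfluent (r : β → β → Prop) : Prop :=
  ∀ ⦃a b c⦄, r a b → r a c → Join (ReflTransGen r) b c

/-- Confluence of a relation `r`: branchings of arbitrary length are joinable. It is the conclusion
of Newman's lemma. -/
def Confluent (r : β → β → Prop) : Prop :=
  ∀ ⦃a b c⦄, ReflTransGen r a b → ReflTransGen r a c → Join (ReflTransGen r) b c

theorem LocallyConfluent.confluent (hloc : LocallyConfluent r)
    (hwf : WellFounded (Function.swap r)) : Confluent r := by
  intro a
  induction a using hwf.induction with
  | _ a ih =>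
    intro b c hab hac
    obtain rfl | ⟨b₁, hab₁, hb₁b⟩ := hab.cases_head
    · exact ⟨c, hac, .refl⟩
    obtain rfl | ⟨c₁, hac₁, hc₁c⟩ := hac.cases_head
    · exact ⟨b, .refl, hab⟩
    obtain ⟨d, hb₁d, hc₁d⟩ := hloc hab₁ hac₁
    obtain ⟨e, hbe, hde⟩ := ih b₁ hab₁ hb₁b hb₁d
    obtain ⟨w, hew, hcw⟩ := ih c₁ hac₁ (hc₁d.trans hde) hc₁c
    exact ⟨w, hbe.trans hew, hcw⟩

end AbstractRewriting

section StringRewriting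

variable {α : Type*} {R : Set (FreeMonoid α × FreeMonoid α)}

theorem Terminating.wellFounded_swap (hterm : Terminating R) :
    WellFounded (Function.swap (RwStep R)) :=
  wellFounded_iff_isEmpty_descending_chain.mpr ⟨fun s => hterm ⟨s.1, s.2⟩⟩

namespace Step

theorem rwStep (f : Step R) : RwStep R f.src f.tgt :=
  ⟨f, rfl, rfl⟩

theorem src_whisker (u : FreeMonoid α) (f : Step R) (v : FreeMonoid α) :
    (f.whisker u v).src = u * f.src * v := by
  simp only [src, whisker, mul_assoc]

theorem tgt_whisker (u : FreeMonoid α) (f : Step R) (v : FreeMonoid α) :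
    (f.whisker u v).tgt = u * f.tgt * v := by
  simp only [tgt, whisker, mul_assoc]

theorem whisker_one_one (f : Step R) : f.whisker 1 1 = f := by
  simp only [whisker, one_mul, mul_one]

theorem whisker_whisker (u u' : FreeMonoid α) (f : Step R) (v' v : FreeMonoid α) :
    (f.whisker u' v').whisker u v = f.whisker (u * u') (v' * v) := by
  simp only [whisker, mul_assoc]

end Step

theorem RwStep.whisker {x y : FreeMonoid α} (h : RwStep R x y) (u v : FreeMonoid α) :
    RwStep R (u * x * v) (u * y * v) := by
  obtain ⟨f, rfl, rfl⟩ := h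
  exact ⟨f.whisker u v, f.src_whisker u v, f.tgt_whisker u v⟩

namespace Joinable

theorem refl (x : FreeMonoid α) : Joinable R x x :=
  ⟨x, .refl, .refl⟩

theorem symm {x y : FreeMonoid α} : Joinable R x y → Joinable R y x :=
  fun ⟨w, hxw, hyw⟩ => ⟨w, hyw, hxw⟩

theorem whisker {x y : FreeMonoid α} (h : Joinable R x y) (u v : FreeMonoid α) :
    Joinable R (u * x * v) (u * y * v) := by
  obtain ⟨w, hxw, hyw⟩ := h
  have whisker_step : ∀ a b, RwStep R a b → RwStep R (u * a * v) (u * b * v) :=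
    fun _ _ hab => hab.whisker u v
  exact ⟨u * w * v, hxw.lift (u * · * v) whisker_step, hyw.lift (u * · * v) whisker_step⟩

end Joinable

theorem PeifferOriented.joinable {f g : Step R} (h : PeifferOriented f g) :
    Joinable R f.tgt g.tgt := by
  obtain ⟨v, hg, hf⟩ := h
  let gAfterF : Step R := ⟨f.left * f.rule.2 * v, g.rule, g.right, g.rule_mem⟩
  let fAfterG : Step R := ⟨f.left, f.rule, v * g.rule.2 * g.right, f.rule_mem⟩
  have src_gAfterF : gAfterF.src = f.tgt := by
    simp only [gAfterF, Step.src, Step.tgt, hf, mul_assoc]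
  have src_fAfterG : fAfterG.src = g.tgt := by
    simp only [fAfterG, Step.src, Step.tgt, hg, mul_assoc]
  have tgt_eq : fAfterG.tgt = gAfterF.tgt := by
    simp only [fAfterG, gAfterF, Step.tgt, mul_assoc]
  exact ⟨gAfterF.tgt, .single (src_gAfterF ▸ gAfterF.rwStep),
    .single (src_fAfterG ▸ tgt_eq ▸ fAfterG.rwStep)⟩

theorem Peiffer.joinable {f g : Step R} (h : Peiffer f g) : Joinable R f.tgt g.tgt :=
  h.elim PeifferOriented.joinable fun hgf => hgf.joinable.symm

namespace BranchLE

theorem refl (p : Step R × Step R) : BranchLE p p :=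
  ⟨1, 1, p.1.whisker_one_one.symm, p.2.whisker_one_one.symm⟩

theorem trans {p q s : Step R × Step R} (hpq : BranchLE p q) (hqs : BranchLE q s) :
    BranchLE p s := by
  obtain ⟨u', v', hq₁, hq₂⟩ := hpq
  obtain ⟨u, v, hs₁, hs₂⟩ := hqs
  exact ⟨u * u', v' * v, by rw [hs₁, hq₁, Step.whisker_whisker],
    by rw [hs₂, hq₂, Step.whisker_whisker]⟩

theorem eq_of_length_src_le {p q : Step R × Step R} (h : BranchLE p q)
    (hlen : q.1.src.length ≤ p.1.src.length) : p = q := by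
  obtain ⟨u, v, hq₁, hq₂⟩ := h
  rw [hq₁, Step.src_whisker, FreeMonoid.length_mul, FreeMonoid.length_mul] at hlen
  have hu : u = 1 := FreeMonoid.length_eq_zero.mp (by lia)
  have hv : v = 1 := FreeMonoid.length_eq_zero.mp (by lia)
  rw [hu, hv, Step.whisker_one_one] at hq₁ hq₂
  exact Prod.ext hq₁.symm hq₂.symm

theorem joinable_tgt {p q : Step R × Step R} (h : BranchLE p q)
    (hp : Joinable R p.1.tgt p.2.tgt) : Joinable R q.1.tgt q.2.tgt := by
  obtain ⟨u, v, hq₁, hq₂⟩ := h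
  rw [hq₁, hq₂, Step.tgt_whisker, Step.tgt_whisker]
  exact hp.whisker u v

end BranchLE

theorem Overlapping.exists_critical_branchLE {f g : Step R} (h : Overlapping f g) :
    ∃ f' g' : Step R, Critical f' g' ∧ BranchLE (f', g') (f, g) := by
  let below : Set (Step R × Step R) := {p | Overlapping p.1 p.2 ∧ BranchLE p (f, g)}
  have below_nonempty : below.Nonempty := ⟨(f, g), h, .refl _⟩
  obtain ⟨p, ⟨hp, hple⟩, hmin⟩ :=
    exists_minimalFor_of_wellFoundedLT (· ∈ below) (fun p => p.1.src.length) below_nonempty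
  refine ⟨p.1, p.2, ⟨hp, fun f' g' hov hle => ?_⟩, hple⟩
  have length_le : p.1.src.length ≤ f'.src.length :=
    (le_total _ _).elim id (hmin (j := (f', g')) ⟨hov, hle.trans hple⟩)
  exact hle.eq_of_length_src_le length_le

theorem locallyConfluent_of_critical_joinable
    (hcrit : ∀ f g : Step R, Critical f g → Joinable R f.tgt g.tgt) :
    LocallyConfluent (RwStep R) := by
  rintro _ _ _ ⟨f, rfl, rfl⟩ ⟨g, hsrc, rfl⟩
  by_cases heq : f = g
  · exact heq ▸ Joinable.refl f.tgt
  by_cases hpeiffer : Peiffer f g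
  · exact hpeiffer.joinable
  have hov : Overlapping f g := ⟨hsrc.symm, heq, hpeiffer⟩
  obtain ⟨f', g', hcritical, hle⟩ := hov.exists_critical_branchLE
  exact hle.joinable_tgt (hcrit f' g' hcritical)

end StringRewriting

/-- Newman's lemma for string rewriting systems: if `→_R` is terminating and every
critical branching is joinable, then `→_R` is confluent. -/
theorem confluent_of_terminating_of_critical_joinable {α : Type*}
    (R : Set (FreeMonoid α × FreeMonoid α))
    (hterm : Terminating R)
    (hcrit : ∀ f g : Step R, Critical f g → Joinable R f.tgt g.tgt) :
    ∀ x y z : FreeMonoid α, ReflTransGen (RwStep R) x y → ReflTransGen (RwStep R) x z →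
      ∃ w, ReflTransGen (RwStep R) y w ∧ ReflTransGen (RwStep R) z w := by
  have hloc : LocallyConfluent (RwStep R) := locallyConfluent_of_critical_joinable hcrit
  intro x y z hxy hxz
  exact hloc.confluent hterm.wellFounded_swap hxy hxz
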